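/- Let n ≥ 2 and s ∈ ℂ with Re(s) > 0. (1) For a = (a_1,…,a_n), a' = (a'_1,…,a'_n) ∈ ℂ^n with all entries purely imaginary: I_{n,n;a,a'}(s) = [∏_{j=1}^{n} Γ_ℝ(s+a'_1+a_j)]·I_{n,n−1;a,ã'}(s − a'_1/(n−1)), where ã' = (ã'_1,…,ã'_{n−1}) with ã'_j = a'_{j+1} + a'_1/(n−1). (2) For a = (a_1,…,a_n) ∈ ℂ^n and a' = (a'_1,…,a'_{n−1}) ∈ ℂ^{n−1} with all entries purely imaginary: I_{n,n−1;a,a'}(s) = [∏_{j=1}^{n−1} Γ_ℝ(s+a_1+a'_j)]·I_{n−1,n−1;ã,a'}(s − a_1/(n−1)), where ã = (ã_1,…,ã_{n−1}) with ã_j = a_{j+1} + a_1/(n−1). -/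

import Mathlib

open MeasureTheory Complex

noncomputable section

/-- `Γ_ℝ(s) = π^{-s/2} Γ(s/2)`. -/
def GammaR (s : ℂ) : ℂ := (Real.pi : ℂ) ^ (-s / 2) * Complex.Gamma (s / 2)

/-- Modified Bessel function of the second kind, via its integral representation. -/
def BesselK (ν : ℂ) (y : ℝ) : ℂ :=
  (1 / 2) * ∫ t in Set.Ioi (0 : ℝ),
    Complex.exp (-((y : ℂ) / 2) * ((t : ℂ) + 1 / (t : ℂ))) * (t : ℂ) ^ ν / (t : ℂ)

/-- Extend a finite real tuple to `ℕ`, defaulting to `1`. -/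
def extR {k : ℕ} (t : Fin k → ℝ) : ℕ → ℝ := fun i => if h : i < k then t ⟨i, h⟩ else 1

/-- Extend a finite real tuple to `ℕ`, defaulting to `0`. -/
def extR0 {k : ℕ} (t : Fin k → ℝ) : ℕ → ℝ := fun i => if h : i < k then t ⟨i, h⟩ else 0

/-- The positive orthant. -/
def posSet (k : ℕ) : Set (Fin k → ℝ) := {t | ∀ j, 0 < t j}

/-- `|a| = a_1 + ⋯ + a_n` (0-based indexing). -/
def sumA (n : ℕ) (a : ℕ → ℂ) : ℂ := ∑ j ∈ Finset.range n, a j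

/-- `ã_j = a_{j+1} + a_1/(n-1)` (0-based indexing). -/
def tildeA (n : ℕ) (a : ℕ → ℂ) : ℕ → ℂ := fun j => a (j + 1) + a 0 / ((n : ℂ) - 1)

/-- The normalized radial part `Ŵ^A_{n,a}` of the class one `GL_n(ℝ)` Whittaker function,
as a function of `(y_1,…,y_{n-1})` (0-based indexing). -/
def WhittAr : ℕ → (ℕ → ℂ) → (ℕ → ℝ) → ℂ
  | 0, _, _ => 1
  | 1, _, _ => 1
  | 2, a, y => 2 * ((y 0 : ℂ) ^ ((a 0 + a 1) / 2)) *
      BesselK ((a 0 - a 1) / 2) (2 * Real.pi * y 0)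
  | (n + 3), a, y =>
      ∫ t in posSet (n + 2),
        WhittAr (n + 2) (tildeA (n + 3) a)
            (fun j => y (j + 1) * Real.sqrt (extR t (j + 1) / extR t j)) *
          (∏ j ∈ Finset.range (n + 2),
            Complex.exp (((-(Real.pi * y j) ^ 2 * extR t j - 1 / extR t j : ℝ) : ℂ)) *
              ((Real.pi * y j : ℝ) : ℂ) ^ ((((n + 2 - j : ℕ) : ℂ) * a 0) / ((n + 2 : ℕ) : ℂ)) *
              ((extR t j : ℝ) : ℂ) ^ ((((n + 3 : ℕ) : ℂ) * a 0) / (2 * ((n + 2 : ℕ) : ℂ)))) *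
          ((Real.pi * extR t (n + 1) : ℝ) : ℂ) ^ (-(sumA (n + 3) a) / 2) *
          (∏ j ∈ Finset.range (n + 2), ((extR t j : ℝ) : ℂ))⁻¹

/-- `Ŵ^A_{n,a}` as a function of the full tuple `(y_1,…,y_n)`. -/
def WhittAhat (n : ℕ) (a : ℕ → ℂ) (y : ℕ → ℝ) : ℂ :=
  ((y (n - 1) : ℝ) : ℂ) ^ sumA n a * WhittAr n a y

/-- The Mellin transform `U_{n,a}` (0-based: `s j` stands for `s_{j+1}`). -/
def Ufun (n : ℕ) (a : ℕ → ℂ) (s : ℕ → ℂ) : ℂ :=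
  ∫ y in posSet (n - 1),
    WhittAr n a (extR y) *
      ∏ j ∈ Finset.range (n - 1), ((extR y j : ℝ) : ℂ) ^ s j / ((extR y j : ℝ) : ℂ)

/-- The normalized radial part `Ŵ^B_{n,b}` of the class one `SO_{2n+1}(ℝ)` Whittaker function. -/
def WhittBr : ℕ → (ℕ → ℂ) → (ℕ → ℝ) → ℂ
  | 0, _, _ => 1
  | 1, b, y => 2 * BesselK (b 0 / 2) (2 * Real.pi * y 0)
  | (n + 2), b, y =>
      ∫ p in (posSet (n + 2) ×ˢ posSet (n + 1)),
        WhittBr (n + 1) b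
            (fun j =>
              if j < n then
                y (j + 1) *
                  Real.sqrt (extR p.1 (j + 1) * extR p.2 (j + 1) /
                    (extR p.1 (j + 2) * extR p.2 j))
              else y (n + 1) * Real.sqrt (extR p.1 (n + 1) / extR p.2 n)) *
          (∏ j ∈ Finset.range (n + 2),
            Complex.exp (((-(Real.pi * y j) ^ 2 * extR p.1 j - 1 / extR p.1 j : ℝ) : ℂ)) *
              ((Real.pi * y j : ℝ) : ℂ) ^ b (n + 1)) *
          (∏ j ∈ Finset.range (n + 1),
            Complex.exp (((-(Real.pi * y j) ^ 2 * (extR p.1 j / extR p.1 (j + 1)) * extR p.2 j -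
                  1 / extR p.2 j : ℝ) : ℂ)) *
              ((extR p.1 (j + 1) * extR p.2 j : ℝ) : ℂ) ^ (b (n + 1) / 2)) *
          ((extR p.1 0 : ℝ) : ℂ) ^ b (n + 1) *
          (∏ j ∈ Finset.range (n + 1), ((extR p.2 j : ℝ) : ℂ))⁻¹ *
          (∏ j ∈ Finset.range (n + 2), ((extR p.1 j : ℝ) : ℂ))⁻¹

/-- The Mellin transform `V_{n,b}` (0-based: `s j` stands for `s_{j+1}`). -/
def Vfun (n : ℕ) (b : ℕ → ℂ) (s : ℕ → ℂ) : ℂ :=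
  ∫ y in posSet n,
    WhittBr n b (extR y) *
      ∏ j ∈ Finset.range n, ((extR y j : ℝ) : ℂ) ^ s j / ((extR y j : ℝ) : ℂ)

/-- Integral over the vertical line `Re z = c`, i.e. `i·∫_ℝ f(c+it) dt`. -/
def VInt (c : ℝ) (f : ℂ → ℂ) : ℂ := Complex.I * ∫ t : ℝ, f (c + t * Complex.I)

/-- Iterated integral over `k` vertical lines with abscissas `c 0, …, c (k-1)`;
the integrand is fed the contour points as a 0-based sequence. -/
def VIntK (k : ℕ) (c : ℕ → ℝ) (f : (ℕ → ℂ) → ℂ) : ℂ :=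
  Complex.I ^ k * ∫ t : Fin k → ℝ, f (fun i => (c i : ℂ) + (extR0 t i : ℝ) * Complex.I)



/-- The archimedean `GL_n × GL_n` zeta integral in torus coordinates. -/
def zetaGLGL (n : ℕ) (a a' : ℕ → ℂ) (s : ℂ) : ℂ :=
  (2 : ℂ) ^ n * ∫ y in posSet n,
    Complex.exp (((-(Real.pi * extR y (n - 1) ^ 2) : ℝ) : ℂ)) *
      WhittAhat n a (extR y) * WhittAhat n a' (extR y) *
      ∏ j ∈ Finset.range n,
        ((extR y j : ℝ) : ℂ) ^ (((j + 1 : ℕ) : ℂ) * s) / ((extR y j : ℝ) : ℂ)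

/-- The archimedean `GL_n × GL_m` zeta integral (`m < n`) in torus coordinates. -/
def zetaGLm (n m : ℕ) (a a' : ℕ → ℂ) (s : ℂ) : ℂ :=
  (2 : ℂ) ^ m * ∫ y in posSet m,
    WhittAhat n a (extR y) * WhittAhat m a' (extR y) *
      ∏ j ∈ Finset.range m,
        ((extR y j : ℝ) : ℂ) ^ (((j + 1 : ℕ) : ℂ) * s) / ((extR y j : ℝ) : ℂ)

/-- `exp (V j)` for `j < n`, followed by a final `0`. -/
def padExp {n : ℕ} (V : Fin n → ℝ) : Fin (n + 1) → ℝ :=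
  Fin.snoc (α := fun _ => ℝ) (fun j => Real.exp (V j)) 0

/-- The exponent of the Givental kernel in logarithmic coordinates. -/
def giventalExp {n : ℕ} (ξ : Fin (n + 1) → ℝ) (η : Fin n → ℝ) : ℝ :=
  ∑ j, (Real.exp (η j - ξ j.castSucc) + Real.exp (ξ j.succ - η j))

/-- The exponent of the Baxter kernel in logarithmic coordinates. -/
def baxterExp {n : ℕ} (u V : Fin n → ℝ) : ℝ :=
  ∑ j, (Real.exp (u j - V j) + padExp V j.succ * Real.exp (-u j))

/-- `exp (-ξ_n)`, the boundary exponent in the `GL_n × GL_n` zeta integral. -/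
def lastExp : {n : ℕ} → (Fin n → ℝ) → ℝ
  | 0, _ => 0
  | n + 1, ξ => Real.exp (-ξ (Fin.last n))

@[simp] lemma padExp_castSucc {n : ℕ} (V : Fin n → ℝ) (j : Fin n) :
    padExp V j.castSucc = Real.exp (V j) := by simp [padExp]

@[simp] lemma padExp_last {n : ℕ} (V : Fin n → ℝ) : padExp V (Fin.last n) = 0 := by simp [padExp]

lemma padExp_nonneg {n : ℕ} (V : Fin n → ℝ) (j : Fin (n + 1)) : 0 ≤ padExp V j := by
  induction j using Fin.lastCases with
  | last => simp
  | cast j => simpa using (Real.exp_pos _).le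

@[fun_prop] lemma continuous_padExp {n : ℕ} (j : Fin (n + 1)) :
    Continuous fun V : Fin n → ℝ => padExp V j := by
  induction j using Fin.lastCases with
  | last => simpa using continuous_const
  | cast j => simp only [padExp_castSucc]; fun_prop

@[fun_prop] lemma continuous_giventalExp {n : ℕ} {X : Type*} [TopologicalSpace X]
    {f : X → Fin (n + 1) → ℝ} {g : X → Fin n → ℝ} (hf : Continuous f) (hg : Continuous g) :
    Continuous fun x => giventalExp (f x) (g x) := by
  unfold giventalExp; fun_prop

@[fun_prop] lemma continuous_baxterExp {n : ℕ} {X : Type*} [TopologicalSpace X]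
    {f : X → Fin n → ℝ} {g : X → Fin n → ℝ} (hf : Continuous f) (hg : Continuous g) :
    Continuous fun x => baxterExp (f x) (g x) := by
  unfold baxterExp
  have := fun j : Fin n => (continuous_padExp j.succ).comp hg
  simp only [Function.comp_def] at this
  fun_prop

@[fun_prop] lemma continuous_lastExp {n : ℕ} : Continuous fun ξ : Fin n → ℝ => lastExp ξ := by
  cases n with
  | zero => exact continuous_const
  | succ n => simp only [lastExp]; fun_prop

@[fun_prop] lemma continuous_snoc_zero {n : ℕ} :
    Continuous fun V : Fin n → ℝ => (Fin.snoc (α := fun _ => ℝ) V 0 : Fin (n + 1) → ℝ) := by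
  refine continuous_pi fun j => ?_
  induction j using Fin.lastCases with
  | last => simpa using continuous_const
  | cast j => simp only [Fin.snoc_castSucc]; fun_prop

lemma giventalExp_add_lastExp {n : ℕ} (ξ : Fin (n + 1) → ℝ) (η : Fin n → ℝ) :
    giventalExp ξ η + lastExp ξ = baxterExp (Fin.snoc (α := fun _ => ℝ) η 0) ξ := by
  simp only [giventalExp, baxterExp, lastExp, Fin.sum_univ_castSucc, Fin.snoc_castSucc,
    Fin.succ_castSucc, padExp_castSucc, Fin.snoc_last, Fin.succ_last, padExp_last, ← Real.exp_add]
  simp [sub_eq_add_neg]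

lemma giventalExp_snoc {n : ℕ} (V w : Fin n → ℝ) :
    giventalExp (Fin.snoc (α := fun _ => ℝ) V 0) w = baxterExp w V + lastExp w := by
  cases n with
  | zero => simp [giventalExp, baxterExp, lastExp]
  | succ n =>
    simp only [giventalExp, baxterExp, lastExp, Fin.snoc_castSucc]
    rw [Fin.sum_univ_castSucc, Fin.sum_univ_castSucc]
    simp only [Fin.succ_castSucc, padExp_castSucc, Fin.snoc_castSucc, Fin.succ_last, padExp_last,
      Fin.snoc_last, ← Real.exp_add]
    simp [sub_eq_add_neg]
    ring

section Exchange

variable {n : ℕ} (u : Fin (n + 1) → ℝ) (w : Fin n → ℝ)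

/-- Coefficient of `exp (-V_j)` in the exponent of the composed kernel. -/
def exchA (j : Fin (n + 1)) : ℝ := Real.exp (u j) + padExp w j

/-- Coefficient of `exp (V_{j+1})` in the exponent of the composed kernel. -/
def exchB (j : Fin n) : ℝ := Real.exp (-u j.castSucc) + Real.exp (-w j)

/-- The substitution that exchanges the Baxter and the Givental kernels. -/
def exchMap (p : ℝ × (Fin n → ℝ)) : Fin (n + 1) → ℝ :=
  Fin.cons (Real.log (exchA u w 0) + p.1)
    fun j => Real.log (exchA u w j.succ) - Real.log (exchB u w j) - p.2 j

lemma exchA_pos (j : Fin (n + 1)) : 0 < exchA u w j :=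
  add_pos_of_pos_of_nonneg (Real.exp_pos _) (padExp_nonneg _ _)

lemma exchB_pos (j : Fin n) : 0 < exchB u w j := add_pos (Real.exp_pos _) (Real.exp_pos _)

lemma sum_exchMap (p : ℝ × (Fin n → ℝ)) :
    ∑ j, exchMap u w p j = p.1 + ∑ j, u j + ∑ j, w j - ∑ j, p.2 j := by
  have key : ∀ j : Fin n, Real.log (exchA u w j.castSucc) - Real.log (exchB u w j)
      = u j.castSucc + w j := by
    intro j
    rw [← Real.log_div (exchA_pos ..).ne' (exchB_pos ..).ne', ← Real.log_exp (u j.castSucc + w j)]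
    congr 1
    rw [div_eq_iff (exchB_pos ..).ne']
    simp only [exchA, exchB, padExp_castSucc, mul_add, ← Real.exp_add]
    rw [add_comm]; congr 2 <;> ring
  have key2 : Real.log (exchA u w (Fin.last n)) = u (Fin.last n) := by simp [exchA]
  have h := Fin.sum_univ_succ fun j => Real.log (exchA u w j)
  rw [Fin.sum_univ_castSucc, key2] at h
  have h2 := Finset.sum_congr rfl fun j (_ : j ∈ Finset.univ) => key j
  simp only [Finset.sum_sub_distrib, Finset.sum_add_distrib] at h2
  simp only [exchMap, Fin.sum_univ_succ (f := Fin.cons _ _), Fin.cons_zero, Fin.cons_succ,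
    Finset.sum_sub_distrib]
  rw [Fin.sum_univ_castSucc (f := u)]
  linarith

lemma baxterExp_add_giventalExp_exchMap (p : ℝ × (Fin n → ℝ)) :
    baxterExp u (exchMap u w p) + giventalExp (exchMap u w p) w =
      Real.exp (-p.1) + (giventalExp u p.2 + baxterExp p.2 w) := by
  have h1 : ∀ V : Fin (n + 1) → ℝ, baxterExp u V + giventalExp V w =
      ∑ j, exchA u w j * Real.exp (-V j) + ∑ j, exchB u w j * Real.exp (V j.succ) := by
    intro V
    simp only [baxterExp, giventalExp, exchA, exchB, Finset.sum_add_distrib, add_mul]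
    rw [Fin.sum_univ_castSucc (f := fun j => padExp V (Fin.succ j) * _),
      Fin.sum_univ_castSucc (f := fun j => padExp w j * _)]
    simp only [Fin.succ_castSucc, padExp_castSucc, Fin.succ_last, padExp_last, sub_eq_add_neg,
      Real.exp_add, zero_mul, add_zero]
    simp only [mul_comm]
    ring
  have h2 : ∀ j : Fin n, exchA u w j.succ * Real.exp (-exchMap u w p j.succ) =
      exchB u w j * Real.exp (p.2 j) := by
    intro j
    simp only [exchMap, Fin.cons_succ, neg_sub, Real.exp_sub, Real.exp_log (exchA_pos ..),
      Real.exp_log (exchB_pos ..)]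
    field_simp [(exchA_pos u w j.succ).ne', (exchB_pos u w j).ne']
  have h3 : ∀ j : Fin n, exchB u w j * Real.exp (exchMap u w p j.succ) =
      exchA u w j.succ * Real.exp (-p.2 j) := by
    intro j
    simp only [exchMap, Fin.cons_succ, Real.exp_sub, Real.exp_log (exchA_pos ..),
      Real.exp_log (exchB_pos ..), Real.exp_neg]
    field_simp [(exchA_pos u w j.succ).ne', (exchB_pos u w j).ne']
  have h0 : exchA u w 0 * Real.exp (-exchMap u w p 0) = Real.exp (-p.1) := by
    simp only [exchMap, Fin.cons_zero, neg_add, Real.exp_add, Real.exp_neg,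
      Real.exp_log (exchA_pos ..)]
    field_simp [(exchA_pos u w 0).ne']
  rw [h1, Fin.sum_univ_succ, h0]
  simp only [h2, h3]
  simp only [giventalExp, baxterExp, exchA, exchB, Finset.sum_add_distrib, add_mul,
    sub_eq_add_neg, Real.exp_add]
  simp only [mul_comm]
  ring

/-- `exchMap` as a composition of measurable equivalences. -/
def exchEquiv : ℝ × (Fin n → ℝ) ≃ᵐ (Fin (n + 1) → ℝ) :=
  ((MeasurableEquiv.addLeft (Real.log (exchA u w 0))).prodCongr
    (MeasurableEquiv.subLeft fun j => Real.log (exchA u w j.succ) - Real.log (exchB u w j))).trans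
      (MeasurableEquiv.piFinSuccAbove (fun _ : Fin (n + 1) => ℝ) 0).symm

lemma coe_exchEquiv : ⇑(exchEquiv u w) = exchMap u w := by
  funext p
  exact Fin.insertNth_zero' ..

lemma measurePreserving_exchMap : MeasurePreserving (exchMap u w) := by
  rw [← coe_exchEquiv]
  exact (volume_preserving_piFinSuccAbove (fun _ : Fin (n + 1) => ℝ) 0).symm.comp
    ((measurePreserving_add_left volume _).prod (Measure.measurePreserving_sub_left volume _))

lemma measurableEmbedding_exchMap : MeasurableEmbedding (exchMap u w) := by
  rw [← coe_exchEquiv]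
  exact (exchEquiv u w).measurableEmbedding

end Exchange

open scoped ENNReal

/-- The Givental integral with all parameters equal to zero, as an extended nonnegative real. -/
def giventalBound : (n : ℕ) → (Fin n → ℝ) → ℝ≥0∞
  | 0, _ => 1
  | n + 1, ξ => ∫⁻ η : Fin n → ℝ,
      ENNReal.ofReal (Real.exp (-giventalExp ξ η)) * giventalBound n η

@[fun_prop] lemma measurable_giventalExp {n : ℕ} {X : Type*} [MeasurableSpace X]
    {f : X → Fin (n + 1) → ℝ} {g : X → Fin n → ℝ} (hf : Measurable f) (hg : Measurable g) :
    Measurable fun x => giventalExp (f x) (g x) := by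
  unfold giventalExp; fun_prop

@[fun_prop] lemma measurable_baxterExp {n : ℕ} {X : Type*} [MeasurableSpace X]
    {f : X → Fin n → ℝ} {g : X → Fin n → ℝ} (hf : Measurable f) (hg : Measurable g) :
    Measurable fun x => baxterExp (f x) (g x) := by
  unfold baxterExp
  have := fun j : Fin n => (continuous_padExp j.succ).measurable.comp hg
  simp only [Function.comp_def] at this
  fun_prop

@[fun_prop] lemma measurable_giventalBound (n : ℕ) : Measurable (giventalBound n) := by
  induction n with
  | zero => exact measurable_const
  | succ n ih =>
    refine Measurable.lintegral_prod_right (f := fun (ξ : Fin (n + 1) → ℝ) (η : Fin n → ℝ) =>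
      ENNReal.ofReal (Real.exp (-giventalExp ξ η)) * giventalBound n η) ?_
    fun_prop

lemma giventalBound_pos (n : ℕ) (ξ : Fin n → ℝ) : giventalBound n ξ ≠ 0 := by
  induction n with
  | zero => exact one_ne_zero
  | succ n ih =>
    have hm : Measurable fun η : Fin n → ℝ =>
        ENNReal.ofReal (Real.exp (-giventalExp ξ η)) * giventalBound n η := by
      fun_prop
    intro h
    rw [giventalBound, lintegral_eq_zero_iff hm] at h
    obtain ⟨η, hη⟩ := h.exists
    have : ENNReal.ofReal (Real.exp (-giventalExp ξ η)) * giventalBound n η ≠ 0 :=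
      mul_ne_zero (by simp [Real.exp_pos]) (ih η)
    exact this hη

/-- The logarithmic Gamma integral `∫ exp (-θ x - exp (-x)) dx`. -/
def gammaBound (θ : ℝ) : ℝ≥0∞ := ∫⁻ x : ℝ, ENNReal.ofReal (Real.exp (-θ * x - Real.exp (-x)))

lemma setIntegral_Ioi_eq_integral_exp (f : ℝ → ℂ) :
    ∫ t in Set.Ioi (0 : ℝ), f t = ∫ x : ℝ, (Real.exp x : ℂ) * f (Real.exp x) := by
  rw [← Real.range_exp, ← Set.image_univ,
    integral_image_eq_integral_abs_deriv_smul MeasurableSet.univ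
      (fun x _ => (Real.hasDerivAt_exp x).hasDerivWithinAt) Real.exp_injective.injOn,
    setIntegral_univ]
  simp [abs_of_pos (Real.exp_pos _)]

lemma ofReal_exp_cpow (x : ℝ) (c : ℂ) : ((Real.exp x : ℝ) : ℂ) ^ c = cexp (c * x) := by
  rw [Complex.cpow_def_of_ne_zero (by exact_mod_cast (Real.exp_pos x).ne'), ← Complex.ofReal_log
    (Real.exp_pos x).le, Real.log_exp, mul_comm]

lemma integral_cexp_gamma {c : ℂ} (hc : 0 < c.re) :
    ∫ x : ℝ, cexp (-c * x - (Real.exp (-x) : ℝ)) = Complex.Gamma c := by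
  rw [Complex.Gamma_eq_integral hc, Complex.GammaIntegral, setIntegral_Ioi_eq_integral_exp,
    ← integral_neg_eq_self]
  refine integral_congr_ae (.of_forall fun x => ?_)
  beta_reduce
  rw [ofReal_exp_cpow]
  simp only [Complex.ofReal_exp, ← Complex.exp_add]
  congr 1
  push_cast
  ring_nf

lemma integrable_cexp_gamma {c : ℂ} (hc : 0 < c.re) :
    Integrable fun x : ℝ => cexp (-c * x - (Real.exp (-x) : ℝ)) := by
  refine Integrable.of_integral_ne_zero ?_
  rw [integral_cexp_gamma hc]
  exact Complex.Gamma_ne_zero_of_re_pos hc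

lemma gammaBound_lt_top {θ : ℝ} (hθ : 0 < θ) : gammaBound θ < ∞ := by
  have h := (integrable_cexp_gamma (c := θ) (by simpa using hθ)).2
  rw [hasFiniteIntegral_iff_enorm] at h
  refine lt_of_eq_of_lt (lintegral_congr fun x => ?_) h
  rw [← ofReal_norm, Complex.norm_exp]
  congr 2
  simp [← Complex.ofReal_neg, Complex.exp_ofReal_re]

lemma lintegral_exchange {n : ℕ} (θ : ℝ) (u : Fin (n + 1) → ℝ) (w : Fin n → ℝ) :
    ∫⁻ V, ENNReal.ofReal (Real.exp (θ * (∑ j, u j - ∑ j, V j) - baxterExp u V)) *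
        ENNReal.ofReal (Real.exp (-giventalExp V w)) =
      gammaBound θ * ∫⁻ v : Fin n → ℝ, ENNReal.ofReal (Real.exp (-giventalExp u v)) *
        ENNReal.ofReal (Real.exp (θ * (∑ j, v j - ∑ j, w j) - baxterExp v w)) := by
  rw [← (measurePreserving_exchMap u w).lintegral_comp_emb (measurableEmbedding_exchMap u w),
    gammaBound, ← lintegral_prod_mul]
  · refine lintegral_congr fun p => ?_
    simp only [← ENNReal.ofReal_mul (Real.exp_pos _).le, ← Real.exp_add]
    have h1 := sum_exchMap u w p
    have h2 := baxterExp_add_giventalExp_exchMap u w p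
    congr 2
    rw [h1]
    linear_combination -h2
  · fun_prop
  · fun_prop

lemma lintegral_baxter {n : ℕ} (θ : ℝ) (u : Fin n → ℝ) :
    ∫⁻ V, ENNReal.ofReal (Real.exp (θ * (∑ j, u j - ∑ j, V j) - baxterExp u V)) *
      giventalBound n V = gammaBound θ ^ n * giventalBound n u := by
  induction n with
  | zero => simp [baxterExp, giventalBound, volume_pi]
  | succ n ih =>
    simp only [giventalBound]
    calc _ = ∫⁻ V : Fin (n + 1) → ℝ, ∫⁻ w : Fin n → ℝ,
            ENNReal.ofReal (Real.exp (θ * (∑ j, u j - ∑ j, V j) - baxterExp u V)) *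
            (ENNReal.ofReal (Real.exp (-giventalExp V w)) * giventalBound n w) := by
          refine lintegral_congr fun V => (lintegral_const_mul' _ _ ENNReal.ofReal_ne_top).symm
      _ = ∫⁻ w : Fin n → ℝ, ∫⁻ V : Fin (n + 1) → ℝ,
            ENNReal.ofReal (Real.exp (θ * (∑ j, u j - ∑ j, V j) - baxterExp u V)) *
            (ENNReal.ofReal (Real.exp (-giventalExp V w)) * giventalBound n w) := by
          refine lintegral_lintegral_swap ?_
          unfold Function.uncurry
          fun_prop
      _ = ∫⁻ w : Fin n → ℝ, ∫⁻ v : Fin n → ℝ, gammaBound θ *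
            (ENNReal.ofReal (Real.exp (-giventalExp u v)) *
            (ENNReal.ofReal (Real.exp (θ * (∑ j, v j - ∑ j, w j) - baxterExp v w)) *
              giventalBound n w)) := by
          refine lintegral_congr fun w => ?_
          simp only [← mul_assoc]
          rw [lintegral_mul_const _ (by fun_prop), lintegral_exchange,
            lintegral_mul_const _ (by fun_prop)]
          simp only [mul_assoc]
          rw [lintegral_const_mul _ (by fun_prop), mul_assoc]
      _ = _ := by
          rw [lintegral_lintegral_swap (by unfold Function.uncurry; fun_prop), pow_succ', mul_assoc,
            ← lintegral_const_mul _ (by fun_prop), ← lintegral_const_mul _ (by fun_prop)]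
          refine lintegral_congr fun v => ?_
          rw [lintegral_const_mul _ (by fun_prop), lintegral_const_mul _ (by fun_prop), ih]
          ring

/-- The `GL_n × GL_n` zeta integral of `giventalBound`. -/
def zetaBoundSelf (n : ℕ) (θ : ℝ) : ℝ≥0∞ :=
  ∫⁻ ξ : Fin n → ℝ, ENNReal.ofReal (Real.exp (-θ * ∑ j, ξ j - lastExp ξ)) *
    (giventalBound n ξ * giventalBound n ξ)

/-- The `GL_{n+1} × GL_n` zeta integral of `giventalBound`. -/
def zetaBoundSucc (n : ℕ) (θ : ℝ) : ℝ≥0∞ :=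
  ∫⁻ V : Fin n → ℝ, ENNReal.ofReal (Real.exp (-θ * ∑ j, V j)) *
    (giventalBound (n + 1) (Fin.snoc (α := fun _ => ℝ) V 0) * giventalBound n V)

@[fun_prop] lemma measurable_lastExp {n : ℕ} : Measurable fun ξ : Fin n → ℝ => lastExp ξ :=
  continuous_lastExp.measurable

@[fun_prop] lemma measurable_snoc_zero {n : ℕ} {X : Type*} [MeasurableSpace X]
    {f : X → Fin n → ℝ} (hf : Measurable f) :
    Measurable fun x => (Fin.snoc (α := fun _ => ℝ) (f x) 0 : Fin (n + 1) → ℝ) :=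
  continuous_snoc_zero.measurable.comp hf

lemma mul_regroup {M : Type*} [CommSemiring M] {x y p q : M} (h : x * y = p * q) (r t : M) :
    x * (y * r * t) = p * r * (q * t) := by
  rw [mul_assoc y, ← mul_assoc, h]
  ring

lemma zetaBoundSucc_eq (n : ℕ) (θ : ℝ) :
    zetaBoundSucc n θ = gammaBound θ ^ n * zetaBoundSelf n θ := by
  calc zetaBoundSucc n θ = ∫⁻ V : Fin n → ℝ, ∫⁻ w : Fin n → ℝ,
        ENNReal.ofReal (Real.exp (-θ * ∑ j, w j - lastExp w)) * giventalBound n w *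
        (ENNReal.ofReal (Real.exp (θ * (∑ j, w j - ∑ j, V j) - baxterExp w V)) *
          giventalBound n V) := by
        refine lintegral_congr fun V => ?_
        simp only [giventalBound]
        rw [← lintegral_mul_const _ (by fun_prop), ← lintegral_const_mul _ (by fun_prop)]
        refine lintegral_congr fun w => ?_
        have h : ENNReal.ofReal (Real.exp (-θ * ∑ j, V j)) *
            ENNReal.ofReal (Real.exp (-giventalExp (Fin.snoc (α := fun _ => ℝ) V 0) w)) =
            ENNReal.ofReal (Real.exp (-θ * ∑ j, w j - lastExp w)) *
            ENNReal.ofReal (Real.exp (θ * (∑ j, w j - ∑ j, V j) - baxterExp w V)) := by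
          simp only [← ENNReal.ofReal_mul (Real.exp_pos _).le, ← Real.exp_add, giventalExp_snoc]
          congr 2; ring
        exact mul_regroup h _ _
    _ = _ := by
        rw [lintegral_lintegral_swap (by unfold Function.uncurry; fun_prop), zetaBoundSelf,
          ← lintegral_const_mul _ (by fun_prop)]
        refine lintegral_congr fun w => ?_
        rw [lintegral_const_mul _ (by fun_prop), lintegral_baxter]
        ring

lemma zetaBoundSelf_succ (n : ℕ) (θ : ℝ) :
    zetaBoundSelf (n + 1) θ = gammaBound θ ^ (n + 1) * zetaBoundSucc n θ := by
  calc zetaBoundSelf (n + 1) θ = ∫⁻ ξ : Fin (n + 1) → ℝ, ∫⁻ η : Fin n → ℝ,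
        ENNReal.ofReal (Real.exp (-θ * ∑ j, η j)) * giventalBound n η *
        (ENNReal.ofReal (Real.exp (θ * (∑ j, (Fin.snoc (α := fun _ => ℝ) η 0 : Fin (n + 1) → ℝ) j
          - ∑ j, ξ j) - baxterExp (Fin.snoc (α := fun _ => ℝ) η 0) ξ)) *
            giventalBound (n + 1) ξ) := by
        refine lintegral_congr fun ξ => ?_
        conv_lhs => enter [2, 1]; rw [giventalBound]
        rw [← lintegral_mul_const _ (by fun_prop), ← lintegral_const_mul _ (by fun_prop)]
        refine lintegral_congr fun η => ?_
        have h : ENNReal.ofReal (Real.exp (-θ * ∑ j, ξ j - lastExp ξ)) *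
            ENNReal.ofReal (Real.exp (-giventalExp ξ η)) =
            ENNReal.ofReal (Real.exp (-θ * ∑ j, η j)) *
            ENNReal.ofReal (Real.exp (θ * (∑ j, (Fin.snoc (α := fun _ => ℝ) η 0 : Fin (n + 1) → ℝ) j
          - ∑ j, ξ j) - baxterExp (Fin.snoc (α := fun _ => ℝ) η 0) ξ)) := by
          simp only [← ENNReal.ofReal_mul (Real.exp_pos _).le, ← Real.exp_add,
            ← giventalExp_add_lastExp, Fin.sum_univ_castSucc (n := n), Fin.snoc_castSucc,
            Fin.snoc_last]
          congr 2; ring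
        exact mul_regroup h _ _
    _ = _ := by
        rw [lintegral_lintegral_swap (by unfold Function.uncurry; fun_prop), zetaBoundSucc,
          ← lintegral_const_mul _ (by fun_prop)]
        refine lintegral_congr fun w => ?_
        rw [lintegral_const_mul _ (by fun_prop), lintegral_baxter]
        ring

lemma zetaBoundSelf_lt_top (n : ℕ) {θ : ℝ} (hθ : 0 < θ) : zetaBoundSelf n θ < ∞ := by
  induction n with
  | zero => simp [zetaBoundSelf, giventalBound, lastExp, volume_pi]
  | succ n ih =>
    rw [zetaBoundSelf_succ, zetaBoundSucc_eq]
    have h := fun k => ENNReal.pow_lt_top (n := k) (gammaBound_lt_top hθ)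
    exact ENNReal.mul_lt_top (h _) (ENNReal.mul_lt_top (h _) ih)

lemma zetaBoundSucc_lt_top (n : ℕ) {θ : ℝ} (hθ : 0 < θ) : zetaBoundSucc n θ < ∞ := by
  rw [zetaBoundSucc_eq]
  exact ENNReal.mul_lt_top (ENNReal.pow_lt_top (gammaBound_lt_top hθ)) (zetaBoundSelf_lt_top n hθ)

lemma ae_giventalBound_lt_top (n : ℕ) : ∀ᵐ ξ : Fin n → ℝ, giventalBound n ξ < ∞ := by
  have h := ae_lt_top (by fun_prop) (zetaBoundSelf_lt_top n one_pos).ne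
  filter_upwards [h] with ξ hξ
  by_contra h'
  rw [not_lt, top_le_iff] at h'
  simp [h', ENNReal.mul_top, Real.exp_pos] at hξ

lemma ae_giventalBound_snoc_lt_top (n : ℕ) :
    ∀ᵐ V : Fin n → ℝ, giventalBound (n + 1) (Fin.snoc (α := fun _ => ℝ) V 0) < ∞ := by
  have h := ae_lt_top (by fun_prop) (zetaBoundSucc_lt_top n one_pos).ne
  filter_upwards [h] with ξ hξ
  by_contra h'
  rw [not_lt, top_le_iff] at h'
  simp [h', ENNReal.mul_top, ENNReal.top_mul, giventalBound_pos, Real.exp_pos] at hξ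

/-- The Givental integral for the class one `GL_n(ℝ)` Whittaker function in logarithmic
coordinates. -/
def givental : (n : ℕ) → (ℕ → ℂ) → (Fin n → ℝ) → ℂ
  | 0, _, _ => 1
  | n + 1, a, ξ => ∫ η : Fin n → ℝ,
      cexp (a 0 / 2 * (∑ j, η j - ∑ j, ξ j : ℝ) - (giventalExp ξ η : ℝ)) *
        givental n (fun j => a (j + 1)) η

@[fun_prop] lemma measurable_givental (n : ℕ) (a : ℕ → ℂ) : Measurable (givental n a) := by
  induction n generalizing a with
  | zero => exact measurable_const
  | succ n ih =>
    refine StronglyMeasurable.measurable (StronglyMeasurable.integral_prod_right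
      (f := fun (ξ : Fin (n + 1) → ℝ) (η : Fin n → ℝ) =>
        cexp (a 0 / 2 * (∑ j, η j - ∑ j, ξ j : ℝ) - (giventalExp ξ η : ℝ)) *
        givental n (fun j => a (j + 1)) η) (Measurable.stronglyMeasurable ?_))
    have := ih fun j => a (j + 1)
    unfold Function.uncurry
    fun_prop

lemma enorm_cexp_mul_sub (θ : ℂ) (r q : ℝ) :
    ‖cexp (θ * (r : ℝ) - (q : ℝ))‖ₑ = ENNReal.ofReal (Real.exp (θ.re * r - q)) := by
  rw [← ofReal_norm, Complex.norm_exp]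
  simp

lemma enorm_cexp_imag {b : ℂ} (hb : b.re = 0) (r q : ℝ) :
    ‖cexp (b / 2 * (r : ℝ) - (q : ℝ))‖ₑ = ENNReal.ofReal (Real.exp (-q)) := by
  rw [enorm_cexp_mul_sub]
  simp [hb]

lemma enorm_givental_le (n : ℕ) {a : ℕ → ℂ} (ha : ∀ j < n, (a j).re = 0) (ξ : Fin n → ℝ) :
    ‖givental n a ξ‖ₑ ≤ giventalBound n ξ := by
  induction n generalizing a with
  | zero => simp [givental, giventalBound]
  | succ n ih =>
    refine (enorm_integral_le_lintegral_enorm _).trans (lintegral_mono fun η => ?_)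
    rw [enorm_mul, enorm_cexp_imag (ha 0 n.succ_pos)]
    gcongr
    exact ih (fun j hj => ha (j + 1) (by lia)) η

lemma integrable_uncurry_of_enorm_le {m n : ℕ} {f : (Fin m → ℝ) → (Fin n → ℝ) → ℂ}
    {g : (Fin m → ℝ) → (Fin n → ℝ) → ℝ≥0∞} (hf : Measurable (Function.uncurry f))
    (hg : Measurable (Function.uncurry g)) (hfg : ∀ x y, ‖f x y‖ₑ ≤ g x y)
    (h : ∫⁻ x, ∫⁻ y, g x y < ∞) : Integrable (Function.uncurry f) (volume.prod volume) := by
  refine ⟨hf.aestronglyMeasurable, ?_⟩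
  rw [hasFiniteIntegral_iff_enorm]
  refine (lintegral_mono (g := Function.uncurry g) fun p => hfg p.1 p.2).trans_lt ?_
  rwa [lintegral_prod _ hg.aemeasurable]

lemma integral_exchange {n : ℕ} {θ b : ℂ} (h : 0 < (θ + b).re) (u : Fin (n + 1) → ℝ)
    (w : Fin n → ℝ) :
    ∫ V : Fin (n + 1) → ℝ, cexp (θ * (∑ j, u j - ∑ j, V j : ℝ) - (baxterExp u V : ℝ)) *
        cexp (b * (∑ j, w j - ∑ j, V j : ℝ) - (giventalExp V w : ℝ)) =
      Complex.Gamma (θ + b) * ∫ v : Fin n → ℝ,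
        cexp (b * (∑ j, v j - ∑ j, u j : ℝ) - (giventalExp u v : ℝ)) *
        cexp (θ * (∑ j, v j - ∑ j, w j : ℝ) - (baxterExp v w : ℝ)) := by
  rw [← (measurePreserving_exchMap u w).integral_comp (measurableEmbedding_exchMap u w),
    ← integral_cexp_gamma h, ← integral_prod_mul]
  refine integral_congr_ae (.of_forall fun p => ?_)
  simp only [← Complex.exp_add]
  have h1 := sum_exchMap u w p
  have h2 := congrArg (fun x : ℝ => (x : ℂ)) (baxterExp_add_giventalExp_exchMap u w p)
  congr 1
  rw [h1]
  push_cast at h2 ⊢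
  linear_combination -h2

lemma integral_baxter {n : ℕ} {θ : ℂ} (hθ : 0 < θ.re) {a : ℕ → ℂ} (ha : ∀ j < n, (a j).re = 0)
    {u : Fin n → ℝ} (hu : giventalBound n u < ∞) :
    ∫ V : Fin n → ℝ, cexp (θ * (∑ j, u j - ∑ j, V j : ℝ) - (baxterExp u V : ℝ)) * givental n a V =
      (∏ j ∈ Finset.range n, Complex.Gamma (θ + a j / 2)) * givental n a u := by
  induction n generalizing a with
  | zero => simp [baxterExp, givental, volume_pi, measureReal_def]
  | succ n ih =>
    have ha' : ∀ j < n, (a (j + 1)).re = 0 := fun j hj => ha (j + 1) (by lia)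
    have ha0 := ha 0 n.succ_pos
    have hΓ : 0 < (θ + a 0 / 2).re := by simpa [ha0]
    have hg := fun k => ENNReal.pow_lt_top (n := k) (gammaBound_lt_top hθ)
    have int1 : Integrable (Function.uncurry fun (V : Fin (n + 1) → ℝ) (w : Fin n → ℝ) =>
        cexp (θ * (∑ j, u j - ∑ j, V j : ℝ) - (baxterExp u V : ℝ)) *
          (cexp (a 0 / 2 * (∑ j, w j - ∑ j, V j : ℝ) - (giventalExp V w : ℝ)) *
            givental n (fun j => a (j + 1)) w)) (volume.prod volume) := by
      refine integrable_uncurry_of_enorm_le (g := fun V w =>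
        ENNReal.ofReal (Real.exp (θ.re * (∑ j, u j - ∑ j, V j) - baxterExp u V)) *
          (ENNReal.ofReal (Real.exp (-giventalExp V w)) * giventalBound n w))
        (by unfold Function.uncurry; fun_prop) (by unfold Function.uncurry; fun_prop)
        (fun V w => ?_) ?_
      · rw [enorm_mul, enorm_mul, enorm_cexp_imag ha0, enorm_cexp_mul_sub]
        gcongr
        exact enorm_givental_le n ha' w
      · have h := lintegral_baxter θ.re u
        simp only [giventalBound] at h hu
        simp only [lintegral_const_mul' _ _ ENNReal.ofReal_ne_top]
        rw [h]
        exact ENNReal.mul_lt_top (hg _) hu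
    have int2 : Integrable (Function.uncurry fun (v : Fin n → ℝ) (w : Fin n → ℝ) =>
        cexp (a 0 / 2 * (∑ j, v j - ∑ j, u j : ℝ) - (giventalExp u v : ℝ)) *
          (cexp (θ * (∑ j, v j - ∑ j, w j : ℝ) - (baxterExp v w : ℝ)) *
            givental n (fun j => a (j + 1)) w)) (volume.prod volume) := by
      refine integrable_uncurry_of_enorm_le (g := fun v w =>
        ENNReal.ofReal (Real.exp (-giventalExp u v)) *
          (ENNReal.ofReal (Real.exp (θ.re * (∑ j, v j - ∑ j, w j) - baxterExp v w)) *
            giventalBound n w))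
        (by unfold Function.uncurry; fun_prop) (by unfold Function.uncurry; fun_prop)
        (fun V w => ?_) ?_
      · rw [enorm_mul, enorm_mul, enorm_cexp_imag ha0, enorm_cexp_mul_sub]
        gcongr
        exact enorm_givental_le n ha' w
      · simp only [lintegral_const_mul' _ _ ENNReal.ofReal_ne_top, lintegral_baxter]
        simp only [mul_left_comm _ (gammaBound θ.re ^ n)]
        rw [lintegral_const_mul _ (by fun_prop)]
        exact ENNReal.mul_lt_top (hg _) hu
    simp only [givental]
    calc _ = ∫ V : Fin (n + 1) → ℝ, ∫ w : Fin n → ℝ,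
            cexp (θ * (∑ j, u j - ∑ j, V j : ℝ) - (baxterExp u V : ℝ)) *
          (cexp (a 0 / 2 * (∑ j, w j - ∑ j, V j : ℝ) - (giventalExp V w : ℝ)) *
            givental n (fun j => a (j + 1)) w) := by simp only [integral_const_mul]
      _ = ∫ w : Fin n → ℝ, ∫ v : Fin n → ℝ, Complex.Gamma (θ + a 0 / 2) *
          (cexp (a 0 / 2 * (∑ j, v j - ∑ j, u j : ℝ) - (giventalExp u v : ℝ)) *
          (cexp (θ * (∑ j, v j - ∑ j, w j : ℝ) - (baxterExp v w : ℝ)) *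
            givental n (fun j => a (j + 1)) w)) := by
        rw [integral_integral_swap int1]
        refine integral_congr_ae (.of_forall fun w => ?_)
        simp only [← mul_assoc]
        rw [integral_mul_const, integral_exchange hΓ, integral_mul_const]
        simp only [mul_assoc]
        rw [integral_const_mul, mul_assoc]
      _ = Complex.Gamma (θ + a 0 / 2) * ∫ v : Fin n → ℝ, ∫ w : Fin n → ℝ,
          (cexp (a 0 / 2 * (∑ j, v j - ∑ j, u j : ℝ) - (giventalExp u v : ℝ)) *
          (cexp (θ * (∑ j, v j - ∑ j, w j : ℝ) - (baxterExp v w : ℝ)) *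
            givental n (fun j => a (j + 1)) w)) := by
        simp only [integral_const_mul (Complex.Gamma (θ + a 0 / 2))]
        rw [integral_integral_swap int2]
      _ = _ := by
        rw [Finset.prod_range_succ', mul_comm (∏ _ ∈ _, _), mul_assoc,
          ← integral_const_mul (∏ _ ∈ _, _)]
        congr 1
        refine integral_congr_ae ?_
        filter_upwards [ae_giventalBound_lt_top n] with v hv
        rw [integral_const_mul, ih ha' hv]
        ring

lemma integral_givental_self_succ (n : ℕ) {θ : ℂ} (hθ : 0 < θ.re) {a a' : ℕ → ℂ}
    (ha : ∀ j < n + 1, (a j).re = 0) (ha' : ∀ j < n + 1, (a' j).re = 0) :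
    ∫ ξ : Fin (n + 1) → ℝ, cexp (-θ * (∑ j, ξ j : ℝ) - (lastExp ξ : ℝ)) *
        (givental (n + 1) a ξ * givental (n + 1) a' ξ) =
      (∏ j ∈ Finset.range (n + 1), Complex.Gamma (θ + a' 0 / 2 + a j / 2)) *
        ∫ η : Fin n → ℝ, cexp (-θ * (∑ j, η j : ℝ)) *
          (givental (n + 1) a (Fin.snoc (α := fun _ => ℝ) η 0) *
            givental n (fun j => a' (j + 1)) η) := by
  have ha0 := ha' 0 n.succ_pos
  have ha1 : ∀ j < n, (a' (j + 1)).re = 0 := fun j hj => ha' (j + 1) (by lia)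
  have hre : (θ + a' 0 / 2).re = θ.re := by simp [ha0]
  have int : Integrable (Function.uncurry fun (η : Fin n → ℝ) (ξ : Fin (n + 1) → ℝ) =>
      cexp (-θ * (∑ j, η j : ℝ)) * givental n (fun j => a' (j + 1)) η *
      (cexp ((θ + a' 0 / 2) * (∑ j, (Fin.snoc (α := fun _ => ℝ) η 0 : Fin (n + 1) → ℝ) j
          - ∑ j, ξ j : ℝ) - (baxterExp (Fin.snoc (α := fun _ => ℝ) η 0) ξ : ℝ)) *
            givental (n + 1) a ξ)) (volume.prod volume) := by
    refine integrable_uncurry_of_enorm_le (g := fun η ξ =>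
      ENNReal.ofReal (Real.exp (-θ.re * ∑ j, η j)) * giventalBound n η *
      (ENNReal.ofReal (Real.exp (θ.re * (∑ j, (Fin.snoc (α := fun _ => ℝ) η 0 : Fin (n + 1) → ℝ) j
          - ∑ j, ξ j) - baxterExp (Fin.snoc (α := fun _ => ℝ) η 0) ξ)) *
            giventalBound (n + 1) ξ))
      (by unfold Function.uncurry; fun_prop) (by unfold Function.uncurry; fun_prop)
      (fun η ξ => ?_) ?_
    · rw [enorm_mul, enorm_mul, enorm_mul, enorm_cexp_mul_sub, hre]
      gcongr
      · have := enorm_cexp_mul_sub (-θ) (∑ j, η j) 0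
        simp only [Complex.ofReal_zero, sub_zero, Complex.neg_re] at this
        exact this.le
      · exact enorm_givental_le n ha1 η
      · exact enorm_givental_le _ ha ξ
    · have h : ∀ η : Fin n → ℝ, Measurable fun ξ : Fin (n + 1) → ℝ =>
        (ENNReal.ofReal (Real.exp (θ.re * (∑ j, (Fin.snoc (α := fun _ => ℝ) η 0 :
          Fin (n + 1) → ℝ) j - ∑ j, ξ j) - baxterExp (Fin.snoc (α := fun _ => ℝ) η 0) ξ)) *
            giventalBound (n + 1) ξ) := by fun_prop
      simp only [lintegral_const_mul _ (h _), lintegral_baxter]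
      refine lt_of_eq_of_lt ?_ (ENNReal.mul_lt_top
        (ENNReal.pow_lt_top (n := n + 1) (gammaBound_lt_top hθ)) (zetaBoundSucc_lt_top n hθ))
      rw [zetaBoundSucc, ← lintegral_const_mul _ (by fun_prop)]
      refine lintegral_congr fun η => ?_
      ring
  calc _ = ∫ ξ : Fin (n + 1) → ℝ, ∫ η : Fin n → ℝ,
      cexp (-θ * (∑ j, η j : ℝ)) * givental n (fun j => a' (j + 1)) η *
      (cexp ((θ + a' 0 / 2) * (∑ j, (Fin.snoc (α := fun _ => ℝ) η 0 : Fin (n + 1) → ℝ) j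
          - ∑ j, ξ j : ℝ) - (baxterExp (Fin.snoc (α := fun _ => ℝ) η 0) ξ : ℝ)) *
            givental (n + 1) a ξ) := by
        refine integral_congr_ae (.of_forall fun ξ => ?_)
        beta_reduce
        conv_lhs => enter [2, 2]; rw [givental]
        rw [mul_comm (givental _ _ _), ← integral_mul_const, ← integral_const_mul]
        refine integral_congr_ae (.of_forall fun η => mul_regroup ?_ _ _)
        simp only [← Complex.exp_add, ← giventalExp_add_lastExp, Fin.sum_univ_castSucc (n := n),
          Fin.snoc_castSucc, Fin.snoc_last]
        congr 1
        push_cast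
        ring
    _ = _ := by
        rw [← integral_integral_swap int, ← integral_const_mul]
        refine integral_congr_ae ?_
        filter_upwards [ae_giventalBound_snoc_lt_top n] with η hη
        rw [integral_const_mul, integral_baxter (by rwa [hre]) ha hη]
        ring

lemma integral_givental_succ (n : ℕ) {θ : ℂ} (hθ : 0 < θ.re) {a a' : ℕ → ℂ}
    (ha : ∀ j < n + 1, (a j).re = 0) (ha' : ∀ j < n, (a' j).re = 0) :
    ∫ V : Fin n → ℝ, cexp (-θ * (∑ j, V j : ℝ)) *
        (givental (n + 1) a (Fin.snoc (α := fun _ => ℝ) V 0) * givental n a' V) =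
      (∏ j ∈ Finset.range n, Complex.Gamma (θ + a 0 / 2 + a' j / 2)) *
        ∫ w : Fin n → ℝ, cexp (-θ * (∑ j, w j : ℝ) - (lastExp w : ℝ)) *
          (givental n (fun j => a (j + 1)) w * givental n a' w) := by
  have ha0 := ha 0 n.succ_pos
  have ha1 : ∀ j < n, (a (j + 1)).re = 0 := fun j hj => ha (j + 1) (by lia)
  have hre : (θ + a 0 / 2).re = θ.re := by simp [ha0]
  have int : Integrable (Function.uncurry fun (w : Fin n → ℝ) (V : Fin n → ℝ) =>
      cexp (-θ * (∑ j, w j : ℝ) - (lastExp w : ℝ)) * givental n (fun j => a (j + 1)) w *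
      (cexp ((θ + a 0 / 2) * (∑ j, w j - ∑ j, V j : ℝ) - (baxterExp w V : ℝ)) *
            givental n a' V)) (volume.prod volume) := by
    refine integrable_uncurry_of_enorm_le (g := fun w V =>
      ENNReal.ofReal (Real.exp (-θ.re * ∑ j, w j - lastExp w)) * giventalBound n w *
      (ENNReal.ofReal (Real.exp (θ.re * (∑ j, w j - ∑ j, V j) - baxterExp w V)) *
            giventalBound n V))
      (by unfold Function.uncurry; fun_prop) (by unfold Function.uncurry; fun_prop)
      (fun w V => ?_) ?_
    · rw [enorm_mul, enorm_mul, enorm_mul, enorm_cexp_mul_sub, enorm_cexp_mul_sub, hre,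
        Complex.neg_re]
      gcongr
      · exact enorm_givental_le n ha1 w
      · exact enorm_givental_le n ha' V
    · have h : ∀ w : Fin n → ℝ, Measurable fun V : Fin n → ℝ =>
        (ENNReal.ofReal (Real.exp (θ.re * (∑ j, w j - ∑ j, V j) - baxterExp w V)) *
            giventalBound n V) := by fun_prop
      simp only [lintegral_const_mul _ (h _), lintegral_baxter]
      refine lt_of_eq_of_lt ?_ (ENNReal.mul_lt_top
        (ENNReal.pow_lt_top (n := n) (gammaBound_lt_top hθ)) (zetaBoundSelf_lt_top n hθ))
      rw [zetaBoundSelf, ← lintegral_const_mul _ (by fun_prop)]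
      refine lintegral_congr fun η => ?_
      ring
  calc _ = ∫ V : Fin n → ℝ, ∫ w : Fin n → ℝ,
      cexp (-θ * (∑ j, w j : ℝ) - (lastExp w : ℝ)) * givental n (fun j => a (j + 1)) w *
      (cexp ((θ + a 0 / 2) * (∑ j, w j - ∑ j, V j : ℝ) - (baxterExp w V : ℝ)) *
            givental n a' V) := by
        refine integral_congr_ae (.of_forall fun V => ?_)
        beta_reduce
        rw [givental, ← integral_mul_const, ← integral_const_mul]
        refine integral_congr_ae (.of_forall fun w => mul_regroup ?_ _ _)
        simp only [← Complex.exp_add, giventalExp_snoc, Fin.sum_univ_castSucc (n := n),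
          Fin.snoc_castSucc, Fin.snoc_last]
        congr 1
        push_cast
        ring
    _ = _ := by
        rw [← integral_integral_swap int, ← integral_const_mul]
        refine integral_congr_ae ?_
        filter_upwards [ae_giventalBound_lt_top n] with w hw
        rw [integral_const_mul, integral_baxter (by rwa [hre]) ha' hw]
        ring

lemma setIntegral_posSet {k : ℕ} (f : (Fin k → ℝ) → ℂ) :
    ∫ y in posSet k, f y =
      ∫ x : Fin k → ℝ, (∏ j, (Real.exp (x j) : ℂ)) * f fun j => Real.exp (x j) := by
  have hr : posSet k = (fun (x : Fin k → ℝ) j => Real.exp (x j)) '' Set.univ := by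
    ext y
    simp only [posSet, Set.mem_ofPred_eq, Set.image_univ, Set.mem_range]
    refine ⟨fun h => ⟨fun j => Real.log (y j), funext fun j => Real.exp_log (h j)⟩, ?_⟩
    rintro ⟨x, rfl⟩ j
    exact Real.exp_pos _
  have hd : ∀ x ∈ Set.univ, HasFDerivWithinAt (fun (x : Fin k → ℝ) j => Real.exp (x j))
      (ContinuousLinearMap.pi fun j => (Real.exp (x j) • ContinuousLinearMap.id ℝ ℝ).comp
        (ContinuousLinearMap.proj j)) Set.univ x := by
    intro x _
    rw [hasFDerivWithinAt_pi]
    intro j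
    have h := (Real.hasDerivAt_exp (x j)).hasFDerivAt.comp x
      (ContinuousLinearMap.proj (R := ℝ) (φ := fun _ : Fin k => ℝ) j).hasFDerivAt
    exact (h.congr_fderiv (ContinuousLinearMap.ext fun v => by simp [mul_comm])).hasFDerivWithinAt
  rw [hr, integral_image_eq_integral_abs_det_fderiv_smul volume MeasurableSet.univ hd
    (fun x _ y _ h => funext fun j => Real.exp_injective (congrFun h j)), setIntegral_univ]
  refine integral_congr_ae (.of_forall fun x => ?_)
  beta_reduce
  rw [ContinuousLinearMap.det_pi, Finset.abs_prod]
  simp [abs_of_pos (Real.exp_pos _), ContinuousLinearMap.det]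

lemma extR_val {k : ℕ} (t : Fin k → ℝ) (j : Fin k) : extR t j = t j := by simp [extR]

lemma extR_eq_one {k : ℕ} (t : Fin k → ℝ) : extR t k = 1 := by simp [extR]

lemma sumA_tildeA (m : ℕ) (a : ℕ → ℂ) :
    sumA (m + 1) (tildeA (m + 2) a) = sumA (m + 2) a := by
  have h : (m + 1 : ℂ) ≠ 0 := by exact_mod_cast m.succ_ne_zero
  simp only [sumA, tildeA, Finset.sum_add_distrib, Finset.sum_const, Finset.card_range,
    nsmul_eq_mul]
  rw [Finset.sum_range_succ' _ (m + 1)]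
  push_cast
  rw [show (m + 2 - 1 : ℂ) = m + 1 by ring]
  field_simp

lemma givental_add_const (n : ℕ) (a : ℕ → ℂ) (c : ℂ) (ξ : Fin n → ℝ) :
    givental n (fun j => a j + c) ξ = cexp (-(c / 2) * (∑ j, ξ j : ℝ)) * givental n a ξ := by
  induction n generalizing a with
  | zero => simp [givental]
  | succ n ih =>
    simp only [givental]
    rw [← integral_const_mul]
    refine integral_congr_ae (.of_forall fun η => ?_)
    beta_reduce
    rw [ih fun j => a (j + 1), ← mul_assoc, ← mul_assoc, ← Complex.exp_add, ← Complex.exp_add]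
    congr 2
    push_cast
    ring

lemma givental_tildeA (m : ℕ) (a : ℕ → ℂ) (ξ : Fin (m + 1) → ℝ) :
    givental (m + 1) (tildeA (m + 2) a) ξ =
      cexp (-(a 0 / (m + 1) / 2) * (∑ j, ξ j : ℝ)) * givental (m + 1) (fun j => a (j + 1)) ξ := by
  rw [← givental_add_const]
  congr 1
  funext j
  simp only [tildeA]
  push_cast
  congr 2
  ring

lemma sum_succ_mul_sub {n : ℕ} (ξ : Fin (n + 1) → ℝ) :
    ∑ j : Fin n, ((j : ℝ) + 1) * (ξ j.succ - ξ j.castSucc) =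
      (n + 1) * ξ (Fin.last n) - ∑ j, ξ j := by
  induction n with
  | zero => simp
  | succ n ih =>
    have h := ih fun j => ξ j.castSucc
    rw [Fin.sum_univ_castSucc, Fin.sum_univ_castSucc (f := ξ)]
    simp only [Fin.val_castSucc, Fin.succ_castSucc, Fin.val_last, Fin.succ_last] at h ⊢
    rw [h]
    push_cast
    ring

lemma sum_sub_mul_sub {n : ℕ} (ξ : Fin (n + 1) → ℝ) :
    ∑ j : Fin n, ((n : ℝ) - j) * (ξ j.succ - ξ j.castSucc) = ∑ j, ξ j - (n + 1) * ξ 0 := by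
  have h := sum_succ_mul_sub ξ
  have h2 : ∑ j : Fin n, (ξ j.succ - ξ j.castSucc) = ξ (Fin.last n) - ξ 0 := by
    rw [Finset.sum_sub_distrib]
    linarith [Fin.sum_univ_succ ξ, Fin.sum_univ_castSucc ξ]
  calc _ = ∑ j : Fin n, (((n : ℝ) + 1) * (ξ j.succ - ξ j.castSucc) -
        ((j : ℝ) + 1) * (ξ j.succ - ξ j.castSucc)) := Finset.sum_congr rfl fun j _ => by ring
    _ = _ := by
      rw [Finset.sum_sub_distrib, ← Finset.mul_sum, h, h2]
      ring

lemma whittAr_two (a : ℕ → ℂ) (ξ : Fin 2 → ℝ) (y : ℕ → ℝ)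
    (hy : Real.pi * y 0 = Real.exp ((ξ 1 - ξ 0) / 2)) :
    WhittAr 2 a y = cexp ((a 0 + a 1) / 2 * (ξ 1 - Real.log Real.pi : ℝ)) * givental 2 a ξ := by
  have hy0 : y 0 = Real.exp ((ξ 1 - ξ 0) / 2 - Real.log Real.pi) := by
    rw [Real.exp_sub, Real.exp_log Real.pi_pos, ← hy]
    field_simp
  have h1 : ∀ η : Fin 1 → ℝ, givental 1 (fun j => a (j + 1)) η = cexp (-(a 1 / 2) * (η 0 : ℝ)) := by
    intro η
    simp [givental, giventalExp, volume_pi, measureReal_def]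
  have h2 : 2 * Real.pi * Real.exp ((ξ 1 - ξ 0) / 2 - Real.log Real.pi) =
      2 * Real.exp ((ξ 1 - ξ 0) / 2) := by
    rw [Real.exp_sub, Real.exp_log Real.pi_pos]
    field_simp
  have h3 : givental 2 a ξ = ∫ x : ℝ, cexp (a 0 / 2 * (x - (ξ 0 + ξ 1) / 2 : ℝ) -
      (Real.exp ((ξ 1 - ξ 0) / 2) * (Real.exp x + Real.exp (-x)) : ℝ) -
      a 1 / 2 * (x + (ξ 0 + ξ 1) / 2 : ℝ)) := by
    rw [givental]
    refine ((volume_preserving_funUnique (Fin 1) ℝ).symm.integral_comp' _).symm.trans ?_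
    rw [← integral_add_right_eq_self _ ((ξ 0 + ξ 1) / 2)]
    refine integral_congr_ae (.of_forall fun x => ?_)
    have e1 : x + (ξ 0 + ξ 1) / 2 - ξ 0 = (ξ 1 - ξ 0) / 2 + x := by ring
    have e2 : ξ 1 - (x + (ξ 0 + ξ 1) / 2) = (ξ 1 - ξ 0) / 2 + -x := by ring
    simp only [h1, giventalExp, MeasurableEquiv.funUnique_symm_apply, uniqueElim_const,
      Finset.univ_unique, Finset.sum_singleton, Fin.default_eq_zero,
      Fin.castSucc_zero, Fin.succ_zero_eq_one]
    rw [← Complex.exp_add, e1, e2, Real.exp_add, Real.exp_add,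
      show ∑ j, ξ j = ξ 0 + ξ 1 from Fin.sum_univ_two ξ]
    congr 1
    push_cast
    ring
  rw [WhittAr, BesselK, setIntegral_Ioi_eq_integral_exp, hy0, h2, h3, ofReal_exp_cpow]
  simp only [← mul_assoc]
  rw [← integral_const_mul, ← integral_const_mul]
  refine integral_congr_ae (.of_forall fun x => ?_)
  beta_reduce
  have h4 : ((Real.exp x : ℝ) : ℂ) ≠ 0 := by exact_mod_cast (Real.exp_pos x).ne'
  rw [ofReal_exp_cpow, one_div ((Real.exp x : ℝ) : ℂ), ← Complex.ofReal_inv, ← Real.exp_neg]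
  have h5 : ∀ A B C : ℂ, 2 * A * (1 / 2) *
      (((Real.exp x : ℝ) : ℂ) * (B * C / ((Real.exp x : ℝ) : ℂ))) = A * (B * C) := by
    intro A B C
    field_simp
  rw [h5, ← Complex.exp_add, ← Complex.exp_add, ← Complex.exp_add]
  congr 1
  push_cast
  ring

lemma whittAr_eq_givental (m : ℕ) (a : ℕ → ℂ) (ξ : Fin (m + 1) → ℝ) (y : ℕ → ℝ)
    (hy : ∀ j : Fin m, Real.pi * y j = Real.exp ((ξ j.succ - ξ j.castSucc) / 2)) :
    WhittAr (m + 1) a y =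
      cexp (sumA (m + 1) a / 2 * (ξ (Fin.last m) - m * Real.log Real.pi : ℝ)) *
        givental (m + 1) a ξ := by
  match m with
  | 0 =>
    simp [WhittAr, givental, giventalExp, sumA, volume_pi, measureReal_def, ← Complex.exp_add]
  | 1 =>
    have h := whittAr_two a ξ y (by simpa using hy 0)
    simpa [sumA, Finset.sum_range_succ] using h
  | k + 2 =>
    have hk : (k + 2 : ℂ) ≠ 0 := by exact_mod_cast (k + 1).succ_ne_zero
    rw [WhittAr, setIntegral_posSet,
      ← integral_sub_right_eq_self _ (fun j : Fin (k + 2) => ξ j.succ), givental,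
      ← integral_const_mul]
    refine integral_congr_ae (.of_forall fun η => ?_)
    beta_reduce
    set t : Fin (k + 2) → ℝ := fun j => Real.exp ((η - fun j : Fin (k + 2) => ξ j.succ) j)
      with ht
    have htj : ∀ j, t j = Real.exp (η j - ξ j.succ) := fun j => rfl
    have hin : ∀ j : Fin (k + 1), Real.pi * (y (j + 1) * √(extR t (j + 1) / extR t j)) =
        Real.exp ((η j.succ - η j.castSucc) / 2) := by
      intro j
      have h1 := hy j.succ
      have h2 := extR_val t j.succ
      have h3 := extR_val t j.castSucc
      rw [Fin.val_succ] at h1 h2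
      rw [Fin.val_castSucc] at h3
      rw [h2, h3, htj, htj, ← Real.exp_sub, ← Real.exp_half, ← mul_assoc, h1, ← Real.exp_add]
      congr 1
      rw [Fin.succ_castSucc]
      ring
    rw [whittAr_eq_givental (k + 1) _ η _ hin, givental_tildeA, sumA_tildeA]
    have hlast : extR t (k + 1) = Real.exp (η (Fin.last _) - ξ (Fin.last _)) := by
      have := extR_val t (Fin.last _)
      rwa [Fin.val_last, htj, Fin.succ_last] at this
    have hpi : Real.pi * extR t (k + 1) =
        Real.exp (Real.log Real.pi + (η (Fin.last _) - ξ (Fin.last _))) := by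
      rw [hlast, Real.exp_add, Real.exp_log Real.pi_pos]
    have hprod : (∏ j ∈ Finset.range (k + 2), ((extR t j : ℝ) : ℂ)) = ∏ j, ((t j : ℝ) : ℂ) := by
      rw [Finset.prod_range]
      simp only [extR_val]
    have hprod0 : (∏ j, ((t j : ℝ) : ℂ)) ≠ 0 :=
      Finset.prod_ne_zero_iff.2 fun j _ => by exact_mod_cast (Real.exp_pos _).ne'
    have hfac : (∏ j ∈ Finset.range (k + 2),
        cexp (((-(Real.pi * y j) ^ 2 * extR t j - 1 / extR t j : ℝ) : ℂ)) *
          ((Real.pi * y j : ℝ) : ℂ) ^ ((((k + 2 - j : ℕ) : ℂ) * a 0) / ((k + 2 : ℕ) : ℂ)) *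
          ((extR t j : ℝ) : ℂ) ^ ((((k + 3 : ℕ) : ℂ) * a 0) / (2 * ((k + 2 : ℕ) : ℂ)))) =
        cexp (-(giventalExp ξ η : ℝ) +
          a 0 / (2 * (k + 2)) * (∑ j, ξ j - (k + 3) * ξ 0 : ℝ) +
          (k + 3) * a 0 / (2 * (k + 2)) * (∑ j, η j - (∑ j, ξ j - ξ 0) : ℝ)) := by
      have hsum := sum_sub_mul_sub ξ
      have h3 := Fin.sum_univ_succ ξ
      have e1 : (∑ j, ξ j - (k + 3) * ξ 0 : ℝ) =
          ∑ j : Fin (k + 2), (((k + 2 : ℕ) : ℝ) - j) * (ξ j.succ - ξ j.castSucc) := by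
        rw [hsum]; push_cast; ring
      have e2 : (∑ j, η j - (∑ j, ξ j - ξ 0) : ℝ) = ∑ j : Fin (k + 2), (η j - ξ j.succ) := by
        rw [h3, Finset.sum_sub_distrib]; ring
      calc _ = ∏ j : Fin (k + 2),
            cexp (-(Real.exp (η j - ξ j.castSucc) + Real.exp (ξ j.succ - η j) : ℝ) +
              a 0 / (2 * (k + 2)) *
                ((((k + 2 : ℕ) : ℝ) - j) * (ξ j.succ - ξ j.castSucc) : ℝ) +
              (k + 3) * a 0 / (2 * (k + 2)) * (η j - ξ j.succ : ℝ)) := by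
            rw [Finset.prod_range]
            refine Finset.prod_congr rfl fun j _ => ?_
            rw [extR_val, htj, hy j, ofReal_exp_cpow, ofReal_exp_cpow, ← Complex.exp_add,
              ← Complex.exp_add, ← Real.exp_nat_mul, neg_mul, ← Real.exp_add, one_div,
              ← Real.exp_neg, neg_sub, Nat.cast_sub j.is_lt.le]
            congr 1
            rw [show ((2 : ℕ) : ℝ) * ((ξ j.succ - ξ j.castSucc) / 2) + (η j - ξ j.succ) =
              η j - ξ j.castSucc by push_cast; ring]
            push_cast
            field_simp
            ring
        _ = _ := by
            rw [← Complex.exp_sum, e1, e2, giventalExp]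
            push_cast
            simp only [Finset.sum_add_distrib, Finset.sum_neg_distrib, ← Finset.mul_sum]
    simp only [hprod, hpi, hfac, ofReal_exp_cpow]
    have e3 : ∀ A B C D E F : ℂ, A ≠ 0 →
        A * (B * (C * D) * E * F * A⁻¹) = B * C * E * F * D := by
      intro A B C D E F hA
      field_simp
    rw [e3 _ _ _ _ _ _ hprod0, ← mul_assoc, ← Complex.exp_add, ← Complex.exp_add,
      ← Complex.exp_add, ← Complex.exp_add]
    congr 2
    push_cast
    rw [show (k : ℂ) + 1 + 1 = k + 2 by ring]
    field_simp
    ring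

/-- Logarithms of the simple-root coordinates, up to a constant shift. -/
def rootLog {m : ℕ} (ξ : Fin (m + 1) → ℝ) (j : Fin (m + 1)) : ℝ :=
  ((Fin.snoc (α := fun _ => ℝ) (fun i : Fin m => ξ i.succ) 0 : Fin (m + 1) → ℝ) j - ξ j) / 2

@[simp] lemma rootLog_castSucc {m : ℕ} (ξ : Fin (m + 1) → ℝ) (j : Fin m) :
    rootLog ξ j.castSucc = (ξ j.succ - ξ j.castSucc) / 2 := by simp [rootLog]

@[simp] lemma rootLog_last {m : ℕ} (ξ : Fin (m + 1) → ℝ) :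
    rootLog ξ (Fin.last m) = -(ξ (Fin.last m) / 2) := by
  simp [rootLog]
  ring

lemma integral_rootLog {m : ℕ} (f : (Fin (m + 1) → ℝ) → ℂ) (c : Fin (m + 1) → ℝ) :
    2 ^ (m + 1) * ∫ x, f x = ∫ ξ, f (rootLog ξ + c) := by
  set M : Matrix (Fin (m + 1)) (Fin (m + 1)) ℝ := Matrix.of fun j k =>
    (if k = j then -(1 / 2) else 0) + (if (k : ℕ) = j + 1 then 1 / 2 else 0) with hM
  have hdet : M.det = (-(1 / 2)) ^ (m + 1) := by
    rw [Matrix.det_of_isUpperTriangular]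
    · simp [hM]
    · intro i j hij
      have h1 : j ≠ i := ne_of_lt hij
      have h2 : (j : ℕ) ≠ i + 1 := by
        have : (j : ℕ) < i := hij
        omega
      simp [hM, h1, h2]
  have hmul : ∀ ξ, M.mulVec ξ = rootLog ξ := by
    intro ξ
    ext j
    simp only [hM, Matrix.mulVec, dotProduct, Matrix.of_apply, add_mul, Finset.sum_add_distrib,
      ite_mul, zero_mul, Finset.sum_ite_eq', Finset.mem_univ, if_true]
    induction j using Fin.lastCases with
    | last =>
      rw [Finset.sum_eq_zero fun k _ => if_neg (by rw [Fin.val_last]; omega), rootLog_last]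
      ring
    | cast j =>
      have : ∀ k : Fin (m + 1), ((k : ℕ) = j.castSucc + 1) ↔ k = j.succ := fun k => by
        rw [Fin.ext_iff, Fin.val_succ, Fin.val_castSucc]
      simp only [this, Finset.sum_ite_eq', Finset.mem_univ, if_true, rootLog_castSucc]
      ring
  have hu : IsUnit M := by
    rw [Matrix.isUnit_iff_isUnit_det, hdet]
    exact (isUnit_iff_ne_zero.2 (by norm_num)).pow _
  set L := (Matrix.toLin' M).toContinuousLinearMap with hL
  have hLx : ∀ ξ, L ξ = rootLog ξ := fun ξ => by simp [hL, hmul]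
  have himg : L '' Set.univ = Set.univ := by
    rw [Set.image_univ, Set.range_eq_univ]
    exact Matrix.mulVec_surjective_iff_isUnit.2 hu
  have hinj : Set.InjOn L Set.univ :=
    (Matrix.mulVec_injective_iff_isUnit.2 hu : Function.Injective M.mulVec).injOn
  have h := integral_image_eq_integral_abs_det_fderiv_smul volume MeasurableSet.univ
    (fun x _ => L.hasFDerivAt.hasFDerivWithinAt) hinj (fun x => f (x + c))
  have hLdet : |L.det| = (1 / 2) ^ (m + 1) := by
    rw [ContinuousLinearMap.det, hL, LinearMap.coe_toContinuousLinearMap, LinearMap.det_toLin',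
      hdet, abs_pow, abs_neg, abs_of_pos (by norm_num)]
  rw [himg, setIntegral_univ, setIntegral_univ, integral_add_right_eq_self, hLdet,
    integral_smul] at h
  simp only [hLx] at h
  rw [h, Complex.real_smul, ← mul_assoc]
  push_cast
  rw [← mul_pow]
  norm_num

lemma prod_cpow_div_mul {k : ℕ} (x : Fin k → ℝ) (s : ℂ) :
    (∏ j, (Real.exp (x j) : ℂ)) * ∏ j ∈ Finset.range k,
        ((extR (fun j => Real.exp (x j)) j : ℝ) : ℂ) ^ (((j + 1 : ℕ) : ℂ) * s) /
          ((extR (fun j => Real.exp (x j)) j : ℝ) : ℂ) =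
      cexp (s * (∑ j : Fin k, ((j : ℝ) + 1) * x j : ℝ)) := by
  rw [Finset.prod_range, ← Finset.prod_mul_distrib, Complex.ofReal_sum, Finset.mul_sum,
    Complex.exp_sum]
  refine Finset.prod_congr rfl fun j _ => ?_
  have h4 : ((Real.exp (x j) : ℝ) : ℂ) ≠ 0 := by exact_mod_cast (Real.exp_pos _).ne'
  rw [extR_val, mul_div_cancel₀ _ h4, ofReal_exp_cpow]
  congr 1
  push_cast
  ring

lemma sum_succ_mul_rootLog {m : ℕ} (ξ : Fin (m + 1) → ℝ) :
    ∑ j : Fin (m + 1), ((j : ℝ) + 1) * rootLog ξ j = -(∑ j, ξ j) / 2 := by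
  have h := sum_succ_mul_sub ξ
  rw [Fin.sum_univ_castSucc]
  simp only [rootLog_castSucc, rootLog_last, Fin.val_castSucc, Fin.val_last]
  simp only [← mul_div_assoc, ← Finset.sum_div]
  rw [h]
  ring

/-- The constant shift relating logarithms of simple-root coordinates to `rootLog`. -/
def rootShift (m : ℕ) (d : ℝ) : Fin (m + 1) → ℝ :=
  Fin.snoc (α := fun _ => ℝ) (fun _ => -Real.log Real.pi) (-d)

lemma sum_succ_mul_rootShift (m : ℕ) (d : ℝ) :
    ∑ j : Fin (m + 1), ((j : ℝ) + 1) * rootShift m d j =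
      -(m * (m + 1) / 2 * Real.log Real.pi + (m + 1) * d) := by
  rw [Fin.sum_univ_castSucc]
  simp only [rootShift, Fin.snoc_castSucc, Fin.snoc_last, Fin.val_castSucc, Fin.val_last,
    ← Finset.sum_mul, Fin.sum_univ_eq_sum_range (fun j => (j : ℝ) + 1) m]
  have : ∀ k : ℕ, ∑ j ∈ Finset.range k, ((j : ℝ) + 1) = k * (k + 1) / 2 := by
    intro k
    induction k with
    | zero => simp
    | succ k ih => rw [Finset.sum_range_succ, ih]; push_cast; ring
  rw [this]
  ring

lemma sum_succ_mul_rootLog_add {m : ℕ} (ξ : Fin (m + 1) → ℝ) (d : ℝ) :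
    ∑ j : Fin (m + 1), ((j : ℝ) + 1) * (rootLog ξ + rootShift m d) j =
      -(∑ j, ξ j) / 2 - (m * (m + 1) / 2 * Real.log Real.pi + (m + 1) * d) := by
  rw [sub_eq_add_neg, ← sum_succ_mul_rootLog, ← sum_succ_mul_rootShift, ← Finset.sum_add_distrib]
  exact Finset.sum_congr rfl fun j _ => by rw [Pi.add_apply, mul_add]

lemma extR_exp_rootLog {m : ℕ} (ξ : Fin (m + 1) → ℝ) (d : ℝ) (j : Fin m) :
    Real.pi * extR (fun i => Real.exp ((rootLog ξ + rootShift m d) i)) j =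
      Real.exp ((ξ j.succ - ξ j.castSucc) / 2) := by
  have h := extR_val (fun i => Real.exp ((rootLog ξ + rootShift m d) i)) j.castSucc
  rw [Fin.val_castSucc] at h
  rw [h, Pi.add_apply, rootLog_castSucc, rootShift, Fin.snoc_castSucc, ← sub_eq_add_neg,
    Real.exp_sub, Real.exp_log Real.pi_pos]
  field_simp

lemma extR_exp_rootLog_last {m : ℕ} (ξ : Fin (m + 1) → ℝ) (d : ℝ) :
    extR (fun i => Real.exp ((rootLog ξ + rootShift m d) i)) m =
      Real.exp (-(ξ (Fin.last m) / 2 + d)) := by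
  have h := extR_val (fun i => Real.exp ((rootLog ξ + rootShift m d) i)) (Fin.last m)
  rw [Fin.val_last] at h
  rw [h, Pi.add_apply, rootLog_last, rootShift, Fin.snoc_last, neg_add]

lemma whittAhat_rootLog {m : ℕ} (a : ℕ → ℂ) (ξ : Fin (m + 1) → ℝ) (d : ℝ) :
    WhittAhat (m + 1) a (extR fun i => Real.exp ((rootLog ξ + rootShift m d) i)) =
      cexp (-sumA (m + 1) a * (d + m / 2 * Real.log Real.pi : ℝ)) * givental (m + 1) a ξ := by
  rw [WhittAhat, whittAr_eq_givental m a ξ _ (extR_exp_rootLog ξ d), Nat.add_sub_cancel,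
    extR_exp_rootLog_last, ofReal_exp_cpow, ← mul_assoc, ← Complex.exp_add]
  congr 2
  push_cast
  ring

lemma whittAhat_succ_rootLog {m : ℕ} (a : ℕ → ℂ) (ξ : Fin (m + 1) → ℝ) :
    WhittAhat (m + 2) a
        (extR fun i => Real.exp ((rootLog ξ + rootShift m (Real.log Real.pi)) i)) =
      cexp (-sumA (m + 2) a * ((m + 1) / 2 * Real.log Real.pi : ℝ)) *
        givental (m + 2) a (Fin.snoc (α := fun _ => ℝ) ξ 0) := by
  set η : Fin (m + 2) → ℝ := Fin.snoc (α := fun _ => ℝ) ξ 0 with hη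
  have h : ∀ j : Fin (m + 1), Real.pi *
      extR (fun i => Real.exp ((rootLog ξ + rootShift m (Real.log Real.pi)) i)) j =
        Real.exp ((η j.succ - η j.castSucc) / 2) := by
    intro j
    induction j using Fin.lastCases with
    | last =>
      rw [Fin.val_last, extR_exp_rootLog_last, neg_add, ← sub_eq_add_neg, Real.exp_sub,
        Real.exp_log Real.pi_pos, mul_div_cancel₀ _ Real.pi_ne_zero, Fin.succ_last, hη,
        Fin.snoc_last, Fin.snoc_castSucc]
      congr 1
      ring
    | cast j =>
      rw [Fin.val_castSucc, extR_exp_rootLog, Fin.succ_castSucc, hη, Fin.snoc_castSucc,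
        Fin.snoc_castSucc]
  rw [WhittAhat, whittAr_eq_givental (m + 1) a η _ h, show m + 2 - 1 = m + 1 from rfl, extR_eq_one,
    Complex.ofReal_one, Complex.one_cpow, one_mul, hη, Fin.snoc_last]
  congr 2
  push_cast
  ring

lemma zetaGLGL_eq_givental (m : ℕ) (a a' : ℕ → ℂ) (s : ℂ) :
    zetaGLGL (m + 1) a a' s =
      cexp (-((m + 1) ^ 2 * s + (m + 1) * sumA (m + 1) a + (m + 1) * sumA (m + 1) a') / 2 *
        Real.log Real.pi) *
      ∫ ξ : Fin (m + 1) → ℝ, cexp (-(s / 2) * (∑ j, ξ j : ℝ) - (lastExp ξ : ℝ)) *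
        (givental (m + 1) a ξ * givental (m + 1) a' ξ) := by
  rw [zetaGLGL, setIntegral_posSet,
    integral_rootLog _ (rootShift m (Real.log Real.pi / 2)), ← integral_const_mul]
  refine integral_congr_ae (.of_forall fun ξ => ?_)
  beta_reduce
  have hl : -(Real.pi * extR (fun i => Real.exp
      ((rootLog ξ + rootShift m (Real.log Real.pi / 2)) i)) m ^ 2) = -lastExp ξ := by
    rw [extR_exp_rootLog_last, ← Real.exp_nat_mul, lastExp]
    nth_rw 1 [← Real.exp_log Real.pi_pos]
    rw [← Real.exp_add]
    congr 2
    push_cast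
    ring
  have hs : ∀ P E W W' Q : ℂ, P * (E * W * W' * Q) = E * W * W' * (P * Q) := fun _ _ _ _ _ => by
    ring
  have hm : ∀ E A G B G' Q : ℂ, E * (A * G) * (B * G') * Q = E * A * B * Q * (G * G') :=
    fun _ _ _ _ _ _ => by ring
  rw [hs, prod_cpow_div_mul, whittAhat_rootLog, whittAhat_rootLog, Nat.add_sub_cancel, hl, hm,
    ← Complex.exp_add, ← Complex.exp_add, ← Complex.exp_add, ← mul_assoc (cexp _) (cexp _),
    ← Complex.exp_add, sum_succ_mul_rootLog_add]
  congr 2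
  push_cast
  ring

lemma zetaGLm_eq_givental (m : ℕ) (a a' : ℕ → ℂ) (s : ℂ) :
    zetaGLm (m + 2) (m + 1) a a' s =
      cexp (-((m + 1) * (m + 2) * s + (m + 1) * sumA (m + 2) a + (m + 2) * sumA (m + 1) a') / 2 *
        Real.log Real.pi) *
      ∫ ξ : Fin (m + 1) → ℝ, cexp (-(s / 2) * (∑ j, ξ j : ℝ)) *
        (givental (m + 2) a (Fin.snoc (α := fun _ => ℝ) ξ 0) * givental (m + 1) a' ξ) := by
  rw [zetaGLm, setIntegral_posSet,
    integral_rootLog _ (rootShift m (Real.log Real.pi)), ← integral_const_mul]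
  refine integral_congr_ae (.of_forall fun ξ => ?_)
  beta_reduce
  have hs : ∀ P W W' Q : ℂ, P * (W * W' * Q) = W * W' * (P * Q) := fun _ _ _ _ => by ring
  have hm : ∀ A G B G' Q : ℂ, A * G * (B * G') * Q = A * B * Q * (G * G') :=
    fun _ _ _ _ _ => by ring
  rw [hs, prod_cpow_div_mul, whittAhat_succ_rootLog, whittAhat_rootLog, hm,
    ← Complex.exp_add, ← Complex.exp_add, ← mul_assoc (cexp _) (cexp _),
    ← Complex.exp_add, sum_succ_mul_rootLog_add]
  congr 2
  push_cast
  ring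

lemma prod_GammaR (k : ℕ) (s c : ℂ) (a : ℕ → ℂ) :
    ∏ j ∈ Finset.range k, GammaR (s + c + a j) =
      cexp (-(k * (s + c) + sumA k a) / 2 * Real.log Real.pi) *
        ∏ j ∈ Finset.range k, Complex.Gamma (s / 2 + c / 2 + a j / 2) := by
  have h : -(k * (s + c) + sumA k a) / 2 * Real.log Real.pi =
      ∑ j ∈ Finset.range k, -(s + c + a j) / 2 * (Real.log Real.pi : ℂ) := by
    rw [← Finset.sum_mul, ← Finset.sum_div, Finset.sum_neg_distrib, Finset.sum_add_distrib, sumA]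
    simp only [Finset.sum_const, Finset.card_range, nsmul_eq_mul]
  rw [h, Complex.exp_sum, ← Finset.prod_mul_distrib]
  refine Finset.prod_congr rfl fun j _ => ?_
  rw [GammaR, ← ofReal_exp_cpow, Real.exp_log Real.pi_pos, add_div, add_div]

lemma zetaGLGL_eq_zetaGLm (m : ℕ) {s : ℂ} (hs : 0 < s.re) {a a' : ℕ → ℂ}
    (ha : ∀ j < m + 2, (a j).re = 0) (ha' : ∀ j < m + 2, (a' j).re = 0) :
    zetaGLGL (m + 2) a a' s = (∏ j ∈ Finset.range (m + 2), GammaR (s + a' 0 + a j)) *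
      zetaGLm (m + 2) (m + 1) a (tildeA (m + 2) a') (s - a' 0 / (m + 1)) := by
  have hm : (m + 1 : ℂ) ≠ 0 := by exact_mod_cast m.succ_ne_zero
  have hθ : 0 < (s / 2).re := by simpa using hs
  have hint : ∀ ξ : Fin (m + 1) → ℝ,
      cexp (-((s - a' 0 / (m + 1)) / 2) * (∑ j, ξ j : ℝ)) *
        (givental (m + 2) a (Fin.snoc (α := fun _ => ℝ) ξ 0) *
          givental (m + 1) (tildeA (m + 2) a') ξ) =
      cexp (-(s / 2) * (∑ j, ξ j : ℝ)) * (givental (m + 2) a (Fin.snoc (α := fun _ => ℝ) ξ 0) *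
        givental (m + 1) (fun j => a' (j + 1)) ξ) := by
    intro ξ
    rw [givental_tildeA, mul_left_comm (givental _ _ _) (cexp _), ← mul_assoc (cexp _) (cexp _),
      ← Complex.exp_add]
    congr 2
    ring
  rw [zetaGLGL_eq_givental (m + 1), integral_givental_self_succ (m + 1) hθ ha ha', prod_GammaR,
    zetaGLm_eq_givental, sumA_tildeA]
  simp only [hint]
  rw [mul_mul_mul_comm (cexp _) _ (cexp _), ← Complex.exp_add]
  congr 2
  push_cast
  field_simp
  ring

lemma zetaGLm_eq_zetaGLGL (m : ℕ) {s : ℂ} (hs : 0 < s.re) {a a' : ℕ → ℂ}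
    (ha : ∀ j < m + 2, (a j).re = 0) (ha' : ∀ j < m + 1, (a' j).re = 0) :
    zetaGLm (m + 2) (m + 1) a a' s = (∏ j ∈ Finset.range (m + 1), GammaR (s + a 0 + a' j)) *
      zetaGLGL (m + 1) (tildeA (m + 2) a) a' (s - a 0 / (m + 1)) := by
  have hm : (m + 1 : ℂ) ≠ 0 := by exact_mod_cast m.succ_ne_zero
  have hθ : 0 < (s / 2).re := by simpa using hs
  have hint : ∀ ξ : Fin (m + 1) → ℝ,
      cexp (-((s - a 0 / (m + 1)) / 2) * (∑ j, ξ j : ℝ) - (lastExp ξ : ℝ)) *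
        (givental (m + 1) (tildeA (m + 2) a) ξ * givental (m + 1) a' ξ) =
      cexp (-(s / 2) * (∑ j, ξ j : ℝ) - (lastExp ξ : ℝ)) *
        (givental (m + 1) (fun j => a (j + 1)) ξ * givental (m + 1) a' ξ) := by
    intro ξ
    rw [givental_tildeA, mul_assoc (cexp _), ← mul_assoc (cexp _) (cexp _), ← Complex.exp_add]
    congr 2
    ring
  rw [zetaGLm_eq_givental, integral_givental_succ (m + 1) hθ ha ha', prod_GammaR,
    zetaGLGL_eq_givental, sumA_tildeA]
  simp only [hint]
  rw [mul_mul_mul_comm (cexp _) _ (cexp _), ← Complex.exp_add]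
  congr 2
  push_cast
  field_simp
  ring

/-- Recursive relations among archimedean `GL × GL` zeta integrals
(Proposition 2.2 of Ishii–Stade). -/
theorem gl_gl_zeta_recursion (n : ℕ) (hn : 2 ≤ n) (s : ℂ) (hs : 0 < s.re) :
    (∀ a a' : ℕ → ℂ, (∀ j < n, (a j).re = 0) → (∀ j < n, (a' j).re = 0) →
      zetaGLGL n a a' s =
        (∏ j ∈ Finset.range n, GammaR (s + a' 0 + a j)) *
          zetaGLm n (n - 1) a (tildeA n a') (s - a' 0 / ((n : ℂ) - 1))) ∧
    (∀ a a' : ℕ → ℂ, (∀ j < n, (a j).re = 0) → (∀ j < n - 1, (a' j).re = 0) →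
      zetaGLm n (n - 1) a a' s =
        (∏ j ∈ Finset.range (n - 1), GammaR (s + a 0 + a' j)) *
          zetaGLGL (n - 1) (tildeA n a) a' (s - a 0 / ((n : ℂ) - 1))) := by
  obtain ⟨m, rfl⟩ := Nat.exists_eq_add_of_le' hn
  have hc : ((m + 2 : ℕ) : ℂ) - 1 = m + 1 := by
    push_cast
    ring
  rw [hc, show m + 2 - 1 = m + 1 from rfl]
  exact ⟨fun a a' ha ha' => zetaGLGL_eq_zetaGLm m hs ha ha',
    fun a a' ha ha' => zetaGLm_eq_zetaGLGL m hs ha ha'⟩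

end
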